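/- arXiv:2309.03850 — 2 statements merged into one kernel-verified Lean document; each statement's English description precedes it below -/
import Mathlib

section
/- Let F, G : ℕ → ℂ be finitely supported and define, for v ∈ V_+, (F★G)(v) = Σ_{w ∈ V_+} F(dist(v,w))·G(|w|). Then (a) F★G is radial around v_0: there is H : ℕ → ℂ with (F★G)(v) = H(|v|) for all v ∈ V_+; and (b) the product is commutative: Σ_{w ∈ V_+} F(dist(v,w))·G(|w|) = Σ_{w ∈ V_+} G(dist(v,w))·F(|w|) for every v ∈ V_+. -/
open scoped BigOperators ComplexOrder

/-- A semi-homogeneous tree `T_{q_+,q_-}`: a connected acyclic simple graph with a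
parity function `eps` (true = `+`, false = `−`) that flips across edges, in which every
vertex of parity `+` has exactly `qp + 1` neighbors and every vertex of parity `−` has
exactly `qm + 1` neighbors.  Spheres are finite (this follows from local finiteness
and connectedness, and is recorded as a field for convenience). -/
structure SemiHomTree (qp qm : ℕ) (V : Type) where
  G : SimpleGraph V
  connected : G.Connected
  acyclic : G.IsAcyclic
  eps : V → Bool
  adj_parity : ∀ ⦃v w : V⦄, G.Adj v w → eps w = !eps v
  nbr_finite : ∀ v : V, {w : V | G.Adj v w}.Finite
  degree_plus : ∀ v : V, eps v = true → {w : V | G.Adj v w}.ncard = qp + 1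
  degree_minus : ∀ v : V, eps v = false → {w : V | G.Adj v w}.ncard = qm + 1
  sphere_finite : ∀ (v : V) (n : ℕ), {w : V | G.dist v w = n}.Finite

/-- The averaging operator `M_n`: average of `f` over the sphere of radius `n` around `v`. -/
noncomputable def Mop {qp qm : ℕ} {V : Type} (T : SemiHomTree qp qm V)
    (n : ℕ) (f : V → ℂ) (v : V) : ℂ :=
  (({w : V | T.G.dist v w = n}.ncard : ℂ))⁻¹ * ∑ᶠ w ∈ {w : V | T.G.dist v w = n}, f w

/-- The Laplace operator `μ₁`: the average of `f` over the neighbors of `v`. -/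
noncomputable def lap {qp qm : ℕ} {V : Type} (T : SemiHomTree qp qm V)
    (f : V → ℂ) (v : V) : ℂ :=
  (((if T.eps v then qp else qm : ℕ) : ℂ) + 1)⁻¹ * ∑ᶠ w ∈ {w : V | T.G.Adj v w}, f w

namespace SemiHomTree

variable {qp qm : ℕ} {V : Type}

/-- Branching number at `v`, as a function of the parity. -/
def br (qp qm : ℕ) (b : Bool) : ℂ := if b then (qp : ℂ) else (qm : ℂ)

/-- The neighbor finset. -/
noncomputable def nb (T : SemiHomTree qp qm V) (v : V) : Finset V := (T.nbr_finite v).toFinset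

/-- The sphere finset. -/
noncomputable def sph (T : SemiHomTree qp qm V) (v : V) (n : ℕ) : Finset V :=
  (T.sphere_finite v n).toFinset

lemma mem_nb (T : SemiHomTree qp qm V) {v w : V} : w ∈ T.nb v ↔ T.G.Adj v w := by
  simp [nb]

lemma mem_sph (T : SemiHomTree qp qm V) {v w : V} {n : ℕ} :
    w ∈ T.sph v n ↔ T.G.dist v w = n := by
  simp [sph]

lemma card_nb (T : SemiHomTree qp qm V) (v : V) :
    ((T.nb v).card : ℂ) = br qp qm (T.eps v) + 1 := by
  have h : (T.nb v).card = {w : V | T.G.Adj v w}.ncard := by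
    rw [nb, Set.ncard_eq_toFinset_card _ (T.nbr_finite v)]
  rw [h]
  cases hv : T.eps v
  · rw [T.degree_minus v hv]; simp [br]
  · rw [T.degree_plus v hv]; simp [br]

/-- Closer neighbor: existence. -/
lemma exists_closer (T : SemiHomTree qp qm V) {w v : V} (h : T.G.dist w v ≠ 0) :
    ∃ x, T.G.Adj v x ∧ T.G.dist w x + 1 = T.G.dist w v := by
  obtain ⟨p, hp⟩ := T.connected.exists_walk_length_eq_dist v w
  rw [SimpleGraph.dist_comm] at hp
  cases p with
  | nil => simp at h
  | @cons _ x _ hx p =>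
    refine ⟨x, hx, ?_⟩
    have h1 := SimpleGraph.dist_le p
    rw [SimpleGraph.dist_comm] at h1
    have h2 := T.acyclic.dist_eq_dist_add_one_of_adj_of_reachable w hx (T.connected w v)
    simp at hp
    omega

/-- Closer neighbor: uniqueness. -/
lemma closer_unique (T : SemiHomTree qp qm V) {w v x y : V}
    (hx : T.G.Adj v x) (hy : T.G.Adj v y)
    (dx : T.G.dist w x + 1 = T.G.dist w v) (dy : T.G.dist w y + 1 = T.G.dist w v) : x = y := by
  obtain ⟨p, hp⟩ := T.connected.exists_walk_length_eq_dist x w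
  obtain ⟨q, hq⟩ := T.connected.exists_walk_length_eq_dist y w
  rw [SimpleGraph.dist_comm] at hp hq
  have h1 : (SimpleGraph.Walk.cons hx p).IsPath := by
    apply SimpleGraph.Walk.isPath_of_length_eq_dist
    rw [SimpleGraph.dist_comm]
    simp [hp, dx]
  have h2 : (SimpleGraph.Walk.cons hy q).IsPath := by
    apply SimpleGraph.Walk.isPath_of_length_eq_dist
    rw [SimpleGraph.dist_comm]
    simp [hq, dy]
  have h3 := T.acyclic.path_unique ⟨_, h1⟩ ⟨_, h2⟩
  have h4 : SimpleGraph.Walk.cons hx p = SimpleGraph.Walk.cons hy q := congrArg Subtype.val h3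
  have h5 := congrArg SimpleGraph.Walk.snd h4
  simpa using h5

lemma sum_nb (T : SemiHomTree qp qm V) (f : ℕ → ℂ) (w v : V) :
    ∑ x ∈ T.nb v, f (T.G.dist w x) =
      if T.G.dist w v = 0 then (br qp qm (T.eps v) + 1) * f 1
      else f (T.G.dist w v - 1) + br qp qm (T.eps v) * f (T.G.dist w v + 1) := by
  classical
  split_ifs with h
  · rw [← T.card_nb v, ← nsmul_eq_mul]
    apply Finset.sum_eq_card_nsmul
    intro x hx
    rw [T.mem_nb] at hx
    have h2 := T.acyclic.dist_eq_dist_add_one_of_adj_of_reachable w hx (T.connected w v)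
    congr 1
    omega
  · obtain ⟨y, hy, dy⟩ := T.exists_closer h
    have hy' := T.mem_nb.2 hy
    rw [← Finset.add_sum_erase _ _ hy']
    have hc : (((T.nb v).erase y).card : ℂ) = br qp qm (T.eps v) := by
      have := T.card_nb v
      rw [← Finset.card_erase_add_one hy'] at this
      push_cast at this
      linear_combination this
    congr 1
    · congr 1; omega
    · rw [← hc, ← nsmul_eq_mul]
      apply Finset.sum_eq_card_nsmul
      intro x hx
      rw [Finset.mem_erase, T.mem_nb] at hx
      have h2 := T.acyclic.dist_eq_dist_add_one_of_adj_of_reachable w hx.2 (T.connected w v)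
      congr 1
      rcases h2 with h2 | h2
      · exact absurd (T.closer_unique hx.2 hy h2.symm dy) hx.1
      · exact h2

lemma sum_sph (T : SemiHomTree qp qm V) (h : V → ℂ) (v : V) (a : ℕ) (B : Finset V)
    (hB : T.sph v a ⊆ B) :
    ∑ w ∈ T.sph v a, h w = ∑ w ∈ B, if T.G.dist w v = a then h w else 0 := by
  classical
  rw [← Finset.sum_filter]
  apply Finset.sum_congr _ (fun _ _ => rfl)
  ext w
  rw [Finset.mem_filter, T.mem_sph, SimpleGraph.dist_comm]
  refine ⟨fun hw => ⟨hB ?_, hw⟩, fun hw => hw.2⟩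
  rw [T.mem_sph, SimpleGraph.dist_comm, hw]

lemma recursion (T : SemiHomTree qp qm V) (h : V → ℂ) (v : V) (a : ℕ) :
    ∑ x ∈ T.nb v, ∑ w ∈ T.sph x a, h w =
      ∑ w ∈ T.sph v (a + 1), h w
        + br qp qm (T.eps v) * (if a = 0 then 0 else ∑ w ∈ T.sph v (a - 1), h w)
        + if a = 1 then h v else 0 := by
  classical
  let B : Finset V := (Finset.range (a + 2)).biUnion (fun n => T.sph v n)
  have hB : ∀ w, w ∈ B ↔ T.G.dist v w < a + 2 := by
    intro w
    simp [B, T.mem_sph]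
  have e1 : ∀ x ∈ T.nb v, ∑ w ∈ T.sph x a, h w =
      ∑ w ∈ B, if T.G.dist w x = a then h w else 0 := by
    intro x hx
    apply T.sum_sph
    intro w hw
    rw [hB]
    rw [T.mem_sph] at hw
    rw [T.mem_nb] at hx
    have h1 := T.connected.dist_triangle (u := v) (v := x) (w := w)
    have h2 := SimpleGraph.dist_eq_one_iff_adj.2 hx
    omega
  have e2 : ∀ b, b ≤ a + 1 → ∑ w ∈ T.sph v b, h w =
      ∑ w ∈ B, if T.G.dist w v = b then h w else 0 := by
    intro b hb
    apply T.sum_sph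
    intro w hw
    rw [hB]
    rw [T.mem_sph] at hw
    omega
  have e3 : (if a = 1 then h v else 0) =
      ∑ w ∈ B, if w = v then (if a = 1 then h w else 0) else 0 := by
    have hv : v ∈ B := by rw [hB]; simp
    rw [Finset.sum_ite_eq' B v]
    simp only [hv, if_true]
  rw [Finset.sum_congr rfl e1, Finset.sum_comm, e2 (a + 1) le_rfl, e2 (a - 1) (by omega), e3]
  have e4 : (if a = 0 then 0 else ∑ w ∈ B, if T.G.dist w v = a - 1 then h w else 0) =
      ∑ w ∈ B, if T.G.dist w v + 1 = a then h w else 0 := by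
    split_ifs with h0
    · simp [h0]
    · apply Finset.sum_congr rfl
      intro w _
      congr 1
      apply propext
      omega
  rw [e4, Finset.mul_sum, ← Finset.sum_add_distrib, ← Finset.sum_add_distrib]
  apply Finset.sum_congr rfl
  intro w _
  rw [T.sum_nb (fun n => if n = a then h w else 0) w v]
  have hwv : w = v ↔ T.G.dist w v = 0 := (T.connected.dist_eq_zero_iff).symm
  simp only [hwv]
  by_cases hd : T.G.dist w v = 0
  · rcases eq_or_ne a 1 with rfl | h1
    · simp [hd]; ring
    · simp [hd, h1, Ne.symm h1]
  · have h1 : (T.G.dist w v - 1 = a) ↔ (T.G.dist w v = a + 1) := by omega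
    simp [hd, h1]

/-- Radial (and parity dependent) functions. -/
def Rad (T : SemiHomTree qp qm V) (S : V → V → ℂ) : Prop :=
  ∃ Φ : Bool → ℕ → ℂ, ∀ u v, S u v = Φ (T.eps v) (T.G.dist u v)

lemma Rad.nb {T : SemiHomTree qp qm V} {S : V → V → ℂ} (h : T.Rad S) :
    T.Rad (fun u v => ∑ x ∈ T.nb v, S u x) := by
  obtain ⟨Φ, hΦ⟩ := h
  refine ⟨fun b d => if d = 0 then (br qp qm b + 1) * Φ (!b) 1
      else Φ (!b) (d - 1) + br qp qm b * Φ (!b) (d + 1), fun u v => ?_⟩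
  dsimp only
  rw [← T.sum_nb (Φ (!(T.eps v))) u v]
  apply Finset.sum_congr rfl
  intro x hx
  rw [hΦ, T.adj_parity (T.mem_nb.1 hx)]

lemma sph_zero (T : SemiHomTree qp qm V) (h : V → ℂ) (v : V) :
    ∑ w ∈ T.sph v 0, h w = h v := by
  have : T.sph v 0 = {v} := by
    ext w
    rw [T.mem_sph, T.connected.dist_eq_zero_iff, Finset.mem_singleton, eq_comm]
  rw [this, Finset.sum_singleton]

lemma rad_sph (T : SemiHomTree qp qm V) (h : V → V → ℂ) (hh : T.Rad h) (a : ℕ) :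
    T.Rad (fun u v => ∑ w ∈ T.sph v a, h u w) := by
  induction a using Nat.twoStepInduction with
  | zero => simpa only [T.sph_zero] using hh
  | one =>
    have h1 := hh.nb
    have e : (fun u v => ∑ w ∈ T.sph v 1, h u w) = fun u v => ∑ x ∈ T.nb v, h u x := by
      funext u v
      have := T.recursion (h u) v 0
      simp only [T.sph_zero] at this
      simpa using this.symm
    rw [e]
    exact h1
  | more a ih0 ih1 =>
    obtain ⟨Φ, hΦ⟩ := ih1.nb
    obtain ⟨Ψ, hΨ⟩ := ih0
    obtain ⟨X, hX⟩ := hh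
    refine ⟨fun b d => Φ b d - br qp qm b * Ψ b d - if a = 0 then X b d else 0, fun u v => ?_⟩
    dsimp only
    rw [← hΦ, ← hΨ, ← hX]
    dsimp only
    have := T.recursion (h u) v (a + 1)
    simp only [Nat.add_eq_zero_iff, one_ne_zero, and_false, if_false, Nat.add_sub_cancel,
      Nat.add_eq_right] at this
    rw [this]
    ring

lemma rad_main (T : SemiHomTree qp qm V) (F G : ℕ → ℂ) (hF : (Function.support F).Finite) :
    T.Rad (fun u v => ∑ᶠ w ∈ {w : V | T.eps w = true}, F (T.G.dist v w) * G (T.G.dist u w)) := by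
  classical
  let h : V → V → ℂ := fun u w => if T.eps w = true then G (T.G.dist u w) else 0
  have hh : T.Rad h := ⟨fun b d => if b = true then G d else 0, fun u v => rfl⟩
  choose Φ hΦ using T.rad_sph h hh
  refine ⟨fun b d => ∑ a ∈ hF.toFinset, F a * Φ a b d, fun u v => ?_⟩
  dsimp only
  simp_rw [← hΦ]
  let B : Finset V := hF.toFinset.biUnion (fun n => T.sph v n)
  have e1 : (∑ᶠ w ∈ {w : V | T.eps w = true}, F (T.G.dist v w) * G (T.G.dist u w))
      = ∑ᶠ w, F (T.G.dist v w) * h u w := by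
    apply finsum_congr
    intro w
    by_cases hw : T.eps w = true <;> simp [h, hw]
  rw [e1, finsum_eq_sum_of_support_subset (s := B), Finset.sum_biUnion]
  · apply Finset.sum_congr rfl
    intro a _
    rw [Finset.mul_sum]
    apply Finset.sum_congr rfl
    intro w hw
    rw [T.mem_sph.1 hw]
  · intro a _ b _ hab
    rw [Function.onFun, Finset.disjoint_left]
    intro w ha hb
    exact hab ((T.mem_sph.1 ha).symm.trans (T.mem_sph.1 hb))
  · intro w hw
    have : F (T.G.dist v w) ≠ 0 := left_ne_zero_of_mul hw
    simp [B, T.mem_sph, this]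

end SemiHomTree

theorem stmt_11 {qp qm : ℕ} (hqp : 2 ≤ qp) (hqm : 2 ≤ qm) {V : Type}
    (T : SemiHomTree qp qm V) (v0 : V) (hv0 : T.eps v0 = true)
    (F G : ℕ → ℂ) (hF : (Function.support F).Finite) (hG : (Function.support G).Finite) :
    (∃ H : ℕ → ℂ, ∀ v : V, T.eps v = true →
      (∑ᶠ w ∈ {w : V | T.eps w = true}, F (T.G.dist v w) * G (T.G.dist v0 w)) =
        H (T.G.dist v0 v)) ∧
    (∀ v : V, T.eps v = true →
      (∑ᶠ w ∈ {w : V | T.eps w = true}, F (T.G.dist v w) * G (T.G.dist v0 w)) =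
        ∑ᶠ w ∈ {w : V | T.eps w = true}, G (T.G.dist v w) * F (T.G.dist v0 w)) := by
  obtain ⟨Φ, hΦ⟩ := T.rad_main F G hF
  dsimp only at hΦ
  refine ⟨⟨Φ true, fun v hv => by rw [hΦ, hv]⟩, fun v hv => ?_⟩
  have h2 := hΦ v v0
  rw [hv0, SimpleGraph.dist_comm] at h2
  rw [hΦ, hv, ← h2]
  simp only [mul_comm]
end

section
/- Let φ : V_+ → ℂ be radial with profile F, with φ(v_0) = 1 and M_2 φ = F(2)·φ on V_+. Then for every n ∈ ℕ, M_{2n} φ = F(2n)·φ on V_+. -/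
open scoped BigOperators ComplexOrder

namespace SemiHomTree

variable {qp qm : ℕ} {V : Type} (T : SemiHomTree qp qm V)

noncomputable def Sph (v : V) (k : ℕ) : Finset V := (T.sphere_finite v k).toFinset

noncomputable def Nb (v : V) : Finset V := (T.nbr_finite v).toFinset

lemma mem_Sph {v w : V} {k : ℕ} : w ∈ T.Sph v k ↔ T.G.dist v w = k := by simp [Sph]

lemma mem_Nb {v w : V} : w ∈ T.Nb v ↔ T.G.Adj v w := by simp [Nb]

noncomputable def B (f : V → ℂ) (v : V) : ℂ := ∑ w ∈ T.Nb v, f w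

noncomputable def S (k : ℕ) (f : V → ℂ) (v : V) : ℂ := ∑ w ∈ T.Sph v k, f w

lemma Mop_eq (n : ℕ) (f : V → ℂ) (v : V) :
    Mop T n f v = ((T.Sph v n).card : ℂ)⁻¹ * T.S n f v := by
  unfold Mop S Sph
  rw [finsum_mem_eq_finite_toFinset_sum _ (T.sphere_finite v n),
    Set.ncard_eq_toFinset_card _ (T.sphere_finite v n)]

lemma card_eq_S (n : ℕ) (v : V) : ((T.Sph v n).card : ℂ) = T.S n (fun _ => 1) v := by
  simp [S]

lemma exists_parent {v w : V} {k : ℕ} (h : T.G.dist v w = k + 1) :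
    ∃ u, T.G.Adj w u ∧ T.G.dist v u = k := by
  obtain ⟨p, hp⟩ := (T.connected w v).exists_walk_length_eq_dist
  rw [SimpleGraph.dist_comm, h] at hp
  cases p with
  | nil => simp at hp
  | cons hadj q =>
    rename_i u
    refine ⟨u, hadj, ?_⟩
    have h1 : T.G.dist u v ≤ q.length := SimpleGraph.dist_le q
    have h2 := T.connected.dist_triangle (u := v) (v := u) (w := w)
    have h3 : T.G.dist u w = 1 := SimpleGraph.dist_eq_one_iff_adj.2 hadj.symm
    have h4 : T.G.dist u v = T.G.dist v u := SimpleGraph.dist_comm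
    simp at hp
    omega

lemma eps_dist (v : V) (k : ℕ) : ∀ w, T.G.dist v w = k →
    T.eps w = (if Even k then T.eps v else !T.eps v) := by
  induction k with
  | zero =>
    intro w h
    rw [T.connected.dist_eq_zero_iff] at h
    simp [h]
  | succ k ih =>
    intro w h
    obtain ⟨u, hu, hd⟩ := T.exists_parent h
    rw [T.adj_parity hu.symm, ih u hd]
    by_cases hk : Even k <;> simp [hk, Nat.even_add_one]

lemma dist_adj (v : V) {u w : V} (h : T.G.Adj u w) :
    T.G.dist v w = T.G.dist v u + 1 ∨ T.G.dist v u = T.G.dist v w + 1 := by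
  have h1 := T.connected.dist_triangle (u := v) (v := u) (w := w)
  have h2 := T.connected.dist_triangle (u := v) (v := w) (w := u)
  have h3 : T.G.dist u w = 1 := SimpleGraph.dist_eq_one_iff_adj.2 h
  have h4 : T.G.dist w u = 1 := SimpleGraph.dist_eq_one_iff_adj.2 h.symm
  have h5 : T.G.dist v u ≠ T.G.dist v w := by
    intro e
    have a := T.eps_dist v _ u e
    have b := T.eps_dist v _ w rfl
    have c := T.adj_parity h
    rw [a, b] at c
    simp at c
  omega

lemma parent_unique {v w u1 u2 : V} {k : ℕ} (h : T.G.dist v w = k + 1)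
    (a1 : T.G.Adj w u1) (a2 : T.G.Adj w u2)
    (d1 : T.G.dist v u1 = k) (d2 : T.G.dist v u2 = k) : u1 = u2 := by
  have key : ∀ u, T.G.Adj w u → T.G.dist v u = k → ∃ p : T.G.Path w v, p.1.snd = u := by
    intro u a d
    obtain ⟨p, hp⟩ := (T.connected u v).exists_walk_length_eq_dist
    refine ⟨⟨SimpleGraph.Walk.cons a p, ?_⟩, by simp⟩
    apply SimpleGraph.Walk.isPath_of_length_eq_dist
    rw [SimpleGraph.Walk.length_cons, hp, SimpleGraph.dist_comm, d, SimpleGraph.dist_comm, h]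
  obtain ⟨p1, e1⟩ := key u1 a1 d1
  obtain ⟨p2, e2⟩ := key u2 a2 d2
  rw [← e1, ← e2, T.acyclic.path_unique p1 p2]

lemma card_Nb (v : V) : (T.Nb v).card = if T.eps v then qp + 1 else qm + 1 := by
  unfold Nb
  rw [← Set.ncard_eq_toFinset_card _ (T.nbr_finite v)]
  cases h : T.eps v
  · simp [T.degree_minus v h]
  · simp [T.degree_plus v h]

open Classical in
lemma card_down {v w : V} {k : ℕ} (h : T.G.dist v w = k + 1) :
    ((T.Nb w).filter (fun u => T.G.dist v u = k)).card = 1 := by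
  obtain ⟨u, hu, hd⟩ := T.exists_parent h
  rw [Finset.card_eq_one]
  refine ⟨u, ?_⟩
  ext x
  simp only [Finset.mem_filter, mem_Nb, Finset.mem_singleton]
  constructor
  · rintro ⟨a, b⟩
    exact T.parent_unique h a hu b hd
  · rintro rfl
    exact ⟨hu, hd⟩

open Classical in
lemma card_up {v w : V} {k : ℕ} (h : T.G.dist v w = k) :
    (((T.Nb w).filter (fun u => T.G.dist v u = k + 1)).card : ℂ) =
      (if T.eps w then (qp : ℂ) else qm) + (if k = 0 then 1 else 0) := by
  have hc := T.card_Nb w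
  have hs := Finset.card_filter_add_card_filter_not (s := T.Nb w) (fun u => T.G.dist v u = k + 1)
  have hn : ((T.Nb w).filter (fun u => ¬ T.G.dist v u = k + 1)).card = if k = 0 then 0 else 1 := by
    cases k with
    | zero =>
      simp only [if_true, Finset.card_eq_zero, Finset.filter_eq_empty_iff, mem_Nb]
      intro x hx
      have := T.dist_adj v hx
      omega
    | succ k =>
      rw [if_neg (by omega)]
      refine Eq.trans ?_ (T.card_down h)
      congr 1
      apply Finset.filter_congr
      intro x hx
      have := T.dist_adj v (T.mem_Nb.1 hx)
      omega
  have : ((T.Nb w).filter (fun u => T.G.dist v u = k + 1)).card =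
      (if T.eps w then qp else qm) + (if k = 0 then 1 else 0) := by
    split_ifs at * <;> omega
  rw [this]
  push_cast
  split_ifs <;> simp

lemma S_B (f : V → ℂ) (v : V) (k : ℕ) (b : Bool) (hb : ∀ w, T.G.dist v w = k → T.eps w = b) :
    T.S (k + 1) (T.B f) v = T.S (k + 2) f v +
      ((if b then (qp : ℂ) else qm) + (if k = 0 then 1 else 0)) * T.S k f v := by
  classical
  unfold S B
  rw [Finset.sum_comm' (t' := T.Sph v (k + 2) ∪ T.Sph v k)
    (s' := fun w => (T.Nb w).filter (fun u => T.G.dist v u = k + 1))]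
  · rw [Finset.sum_union, Finset.mul_sum]
    · congr 1
      · apply Finset.sum_congr rfl
        intro w hw
        rw [Finset.sum_const, T.card_down (T.mem_Sph.1 hw), one_smul]
      · apply Finset.sum_congr rfl
        intro w hw
        rw [Finset.sum_const, nsmul_eq_mul, T.card_up (T.mem_Sph.1 hw), hb w (T.mem_Sph.1 hw)]
    · rw [Finset.disjoint_left]
      intro x
      simp only [mem_Sph]
      omega
  · intro x y
    simp only [Finset.mem_union, mem_Sph, Finset.mem_filter, mem_Nb]
    constructor
    · rintro ⟨h1, h2⟩
      have := T.dist_adj v h2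
      exact ⟨⟨h2.symm, h1⟩, by omega⟩
    · rintro ⟨⟨h1, h2⟩, h3⟩
      exact ⟨h2, h1.symm⟩

lemma S_zero (f : V → ℂ) (v : V) : T.S 0 f v = f v := by
  have : T.Sph v 0 = {v} := by
    ext x
    simp only [mem_Sph, Finset.mem_singleton, T.connected.dist_eq_zero_iff]
    exact eq_comm
  simp [S, this]

lemma S_one (f : V → ℂ) (v : V) : T.S 1 f v = T.B f v := by
  have : T.Sph v 1 = T.Nb v := by
    ext x
    simp only [mem_Sph, mem_Nb, SimpleGraph.dist_eq_one_iff_adj]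
  simp [S, B, this]

lemma eps_even {v w : V} (hv : T.eps v = true) {n : ℕ} (h : T.G.dist v w = 2 * n) :
    T.eps w = true := by
  rw [T.eps_dist v _ w h]; simp [hv]

lemma eps_odd {v w : V} (hv : T.eps v = true) {n : ℕ} (h : T.G.dist v w = 2 * n + 1) :
    T.eps w = false := by
  rw [T.eps_dist v _ w h]; simp [hv]

/-- the universal coefficients -/
noncomputable def coef (qp qm : ℕ) (l : ℂ) : ℕ → ℂ × ℂ
  | 0 => (1, l)
  | n + 1 =>
    let p := coef qp qm l n
    let a := p.2 - ((qp : ℂ) + (if n = 0 then 1 else 0)) * p.1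
    (a, l * a - (qm : ℂ) * p.2)

lemma main_rec (f : V → ℂ) (l : ℂ) (hf : ∀ v, T.eps v = true → T.B (T.B f) v = l * f v)
    (n : ℕ) : ∀ v, T.eps v = true → T.S (2 * n) f v = (coef qp qm l n).1 * f v ∧
      T.S (2 * n + 1) (T.B f) v = (coef qp qm l n).2 * f v := by
  induction n with
  | zero =>
    intro v hv
    simp [coef, S_zero, S_one, hf v hv]
  | succ n ih =>
    intro v hv
    obtain ⟨h1, h2⟩ := ih v hv
    have e1 := T.S_B f v (2 * n) true (fun w hw => T.eps_even hv hw)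
    have e2 := T.S_B (T.B f) v (2 * n + 1) false (fun w hw => T.eps_odd hv hw)
    have e3 : T.S (2 * n + 1 + 1) (T.B (T.B f)) v = l * T.S (2 * n + 2) f v := by
      unfold S
      rw [Finset.mul_sum]
      apply Finset.sum_congr rfl
      intro w hw
      exact hf w (T.eps_even (n := n + 1) hv (T.mem_Sph.1 hw))
    rw [e3] at e2
    have hz : (2 * n = 0) ↔ n = 0 := by omega
    simp only [if_true, hz] at e1
    simp only [Bool.false_eq_true, if_false, Nat.succ_ne_zero, add_zero] at e2
    have a1 : T.S (2 * n + 2) f v = (coef qp qm l (n + 1)).1 * f v := by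
      simp only [coef]
      linear_combination -e1 + h2 - ((qp : ℂ) + (if n = 0 then 1 else 0)) * h1
    refine ⟨a1, ?_⟩
    have : T.S (2 * (n + 1) + 1) (T.B f) v = T.S (2 * n + 1 + 2) (T.B f) v := rfl
    rw [this]
    have a2 : (coef qp qm l (n + 1)).2 =
      l * (coef qp qm l (n + 1)).1 - (qm : ℂ) * (coef qp qm l n).2 := rfl
    rw [a2]
    linear_combination -e2 + l * a1 - (qm : ℂ) * h2

lemma BB_one (v : V) (hv : T.eps v = true) :
    T.B (T.B (fun _ => 1)) v = ((qp : ℂ) + 1) * (qm + 1) * 1 := by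
  have : ∀ w ∈ T.Nb v, T.B (fun _ => (1 : ℂ)) w = (qm : ℂ) + 1 := by
    intro w hw
    have := T.adj_parity (T.mem_Nb.1 hw)
    simp [B, card_Nb, this, hv]
  unfold B at *
  rw [Finset.sum_congr rfl this]
  simp [card_Nb, hv]
  ring

lemma Sph_nonempty (hqp : 2 ≤ qp) (hqm : 2 ≤ qm) (v : V) (k : ℕ) : (T.Sph v k).Nonempty := by
  classical
  induction k with
  | zero => exact ⟨v, by simp [mem_Sph]⟩
  | succ k ih =>
    obtain ⟨w, hw⟩ := ih
    have h := T.card_up (T.mem_Sph.1 hw)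
    have : ((T.Nb w).filter (fun u => T.G.dist v u = k + 1)).Nonempty := by
      rw [← Finset.card_pos]
      by_contra hc
      have hc : ((T.Nb w).filter (fun u => T.G.dist v u = k + 1)).card = 0 := by omega
      rw [hc] at h
      split_ifs at h <;> norm_cast at h <;> omega
    obtain ⟨u, hu⟩ := this
    exact ⟨u, T.mem_Sph.2 (Finset.mem_filter.1 hu).2⟩

end SemiHomTree

theorem stmt_16 {qp qm : ℕ} (hqp : 2 ≤ qp) (hqm : 2 ≤ qm) {V : Type}
    (T : SemiHomTree qp qm V) (v0 : V) (hv0 : T.eps v0 = true)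
    (φ : V → ℂ) (F : ℕ → ℂ)
    (hrad : ∀ v : V, T.eps v = true → φ v = F (T.G.dist v0 v))
    (hone : φ v0 = 1)
    (heig : ∀ v : V, T.eps v = true → Mop T 2 φ v = F 2 * φ v) :
    ∀ (n : ℕ) (v : V), T.eps v = true → Mop T (2 * n) φ v = F (2 * n) * φ v := by
 

  have hN := fun n v hv => (T.main_rec (fun _ => 1) _ T.BB_one n v hv).1
  have hN' : ∀ n v, T.eps v = true → ((T.Sph v (2 * n)).card : ℂ) =
      (SemiHomTree.coef qp qm (((qp : ℂ) + 1) * (qm + 1)) n).1 := by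
    intro n v hv
    rw [T.card_eq_S, hN n v hv, mul_one]
  have hne : ∀ n v, ((T.Sph v n).card : ℂ) ≠ 0 := by
    intro n v
    exact_mod_cast (Finset.card_pos.2 (T.Sph_nonempty hqp hqm v n)).ne'
  obtain ⟨c, hc⟩ : ∃ c : ℂ, ∀ v, T.eps v = true → T.S 2 φ v = c * φ v := by
    refine ⟨(SemiHomTree.coef qp qm (((qp : ℂ) + 1) * (qm + 1)) 1).1 * F 2, ?_⟩
    intro v hv
    have h := heig v hv
    rw [T.Mop_eq, inv_mul_eq_iff_eq_mul₀ (hne _ _), hN' 1 v hv] at h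
    rw [h, mul_assoc]
  have hBB : ∀ v, T.eps v = true → T.B (T.B φ) v = (c + (qp + 1)) * φ v := by
    intro v hv
    have e := T.S_B φ v 0 true (fun w hw => T.eps_even (n := 0) hv hw)
    simp only [zero_add, T.S_one, T.S_zero, if_true, hc v hv] at e
    rw [e]; ring
  intro n v hv
  have h1 := (T.main_rec φ _ hBB n v hv).1
  have h0 := (T.main_rec φ _ hBB n v0 hv0).1
  have h2 : T.S (2 * n) φ v0 = (T.Sph v0 (2 * n)).card * F (2 * n) := by
    unfold SemiHomTree.S
    rw [← nsmul_eq_mul]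
    apply Finset.sum_eq_card_nsmul
    intro w hw
    have hd := T.mem_Sph.1 hw
    rw [hrad w (T.eps_even hv0 hd), hd]
  rw [h2, hone, mul_one, hN' n v0 hv0, ← hN' n v hv] at h0
  rw [T.Mop_eq, inv_mul_eq_iff_eq_mul₀ (hne _ _), h1, ← h0, mul_assoc]
end
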